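/- arXiv:math/0305124 — 4 statements merged into one kernel-verified Lean document; each statement's English description precedes it below -/
import Mathlib

section
/- For all indices p, q, j, k ∈ {1,…,7} one has Σ_{i=1}^{7} ε_{ipq} ε_{ijk} = ε_{pqjk} + δ_{pj} δ_{qk} − δ_{pk} δ_{qj}. -/
open scoped BigOperators Matrix

noncomputable section

namespace G2

/-- The standard basis vector `e i` of `ℝ⁷`. -/
def e (i : Fin 7) : Fin 7 → ℝ := fun j => if j = i then 1 else 0

/-- The 3-form `e^a ∧ e^b ∧ e^c` (determinant convention), evaluated on `(x, y, z)`. -/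
def w3 (a b c : Fin 7) (x y z : Fin 7 → ℝ) : ℝ :=
  x a * (y b * z c - y c * z b) - x b * (y a * z c - y c * z a)
    + x c * (y a * z b - y b * z a)

/-- The 4-form `e^a ∧ e^b ∧ e^c ∧ e^d`, evaluated on `(x, y, z, w)`. -/
def w4 (a b c d : Fin 7) (x y z w : Fin 7 → ℝ) : ℝ :=
  Matrix.det !![x a, x b, x c, x d; y a, y b, y c, y d;
                z a, z b, z c, z d; w a, w b, w c, w d]

/-- The fundamental `G₂` 3-form
`φ = e^{123}+e^{145}+e^{167}+e^{246}-e^{257}-e^{347}-e^{356}` (indices shifted to start at 0),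
as a trilinear alternating function of three vectors. -/
def phi (x y z : Fin 7 → ℝ) : ℝ :=
  w3 0 1 2 x y z + w3 0 3 4 x y z + w3 0 5 6 x y z + w3 1 3 5 x y z
    - w3 1 4 6 x y z - w3 2 3 6 x y z - w3 2 4 5 x y z

/-- The 4-form `ψ = *φ = e^{4567}+e^{2367}+e^{2345}+e^{1357}-e^{1346}-e^{1256}-e^{1247}`
(indices shifted to start at 0), as a function of four vectors. -/
def psi (x y z w : Fin 7 → ℝ) : ℝ :=
  w4 3 4 5 6 x y z w + w4 1 2 5 6 x y z w + w4 1 2 3 4 x y z w + w4 0 2 4 6 x y z w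
    - w4 0 2 3 5 x y z w - w4 0 1 4 5 x y z w - w4 0 1 3 6 x y z w

/-- `ε_{ijk} = φ(e_i, e_j, e_k)`. -/
def eps (i j k : Fin 7) : ℝ := phi (e i) (e j) (e k)

/-- `ε_{ijkl} = ψ(e_i, e_j, e_k, e_l)`. -/
def eps4 (i j k l : Fin 7) : ℝ := psi (e i) (e j) (e k) (e l)

/-- The volume form `e^1 ∧ ⋯ ∧ e^7`, evaluated on a 7-tuple of vectors. -/
def vol (v : Fin 7 → (Fin 7 → ℝ)) : ℝ := Matrix.det (Matrix.of fun i j => v i j)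

/-- The matrix `[v]` with `[v]_{ij} = Σ_k ε_{ijk} v_k`. -/
def bracket (v : Fin 7 → ℝ) : Matrix (Fin 7) (Fin 7) ℝ :=
  Matrix.of fun i j => ∑ k : Fin 7, eps i j k * v k

/-- The vector `⟨A⟩` with `⟨A⟩_i = Σ_{j,k} ε_{ijk} A_{jk}`. -/
def angle (A : Matrix (Fin 7) (Fin 7) ℝ) : Fin 7 → ℝ :=
  fun i => ∑ j : Fin 7, ∑ k : Fin 7, eps i j k * A j k

/-- Wedge product of two 2-forms (determinant convention), evaluated on four vectors. -/
def wedge22 (A B : (Fin 7 → ℝ) → (Fin 7 → ℝ) → ℝ) (v : Fin 4 → (Fin 7 → ℝ)) : ℝ :=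
  (1 / 4 : ℝ) * ∑ σ : Equiv.Perm (Fin 4),
    ((Equiv.Perm.sign σ : ℤ) : ℝ) * (A (v (σ 0)) (v (σ 1)) * B (v (σ 2)) (v (σ 3)))

/-- Wedge product of three 2-forms (determinant convention), evaluated on six vectors. -/
def wedge222 (A B C : (Fin 7 → ℝ) → (Fin 7 → ℝ) → ℝ) (v : Fin 6 → (Fin 7 → ℝ)) : ℝ :=
  (1 / 8 : ℝ) * ∑ σ : Equiv.Perm (Fin 6),
    ((Equiv.Perm.sign σ : ℤ) : ℝ) *
      (A (v (σ 0)) (v (σ 1)) * B (v (σ 2)) (v (σ 3)) * C (v (σ 4)) (v (σ 5)))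

/-- Wedge product of two 2-forms and a 3-form (determinant convention),
evaluated on seven vectors. -/
def wedge223 (A B : (Fin 7 → ℝ) → (Fin 7 → ℝ) → ℝ)
    (C : (Fin 7 → ℝ) → (Fin 7 → ℝ) → (Fin 7 → ℝ) → ℝ)
    (v : Fin 7 → (Fin 7 → ℝ)) : ℝ :=
  (1 / 24 : ℝ) * ∑ σ : Equiv.Perm (Fin 7),
    ((Equiv.Perm.sign σ : ℤ) : ℝ) *
      (A (v (σ 0)) (v (σ 1)) * B (v (σ 2)) (v (σ 3)) * C (v (σ 4)) (v (σ 5)) (v (σ 6)))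

/-- The map `i_φ : S²(ℝ⁷)* → Λ³(ℝ⁷)*`,
`i_φ(h) = Σ_{i,j,k,l} ε_{ikl} h_{ij} e^j ∧ e^k ∧ e^l`, evaluated on `(x, y, z)`. -/
def iphi (h : Fin 7 → Fin 7 → ℝ) (x y z : Fin 7 → ℝ) : ℝ :=
  ∑ i : Fin 7, ∑ j : Fin 7, ∑ k : Fin 7, ∑ l : Fin 7, eps i k l * h i j * w3 j k l x y z

/-!
By multilinearity the identity is `⟨x × y, z × w⟩ = ψ(x, y, z, w) + ⟨x, z⟩⟨y, w⟩ − ⟨x, w⟩⟨y, z⟩`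
for the cross product defined by `⟨u, x × y⟩ = φ(u, x, y)`. The seven terms of `φ` are the lines of
a Fano plane on the indices, so `(x × y)_i` is a signed sum of three minors `x_a y_b − x_b y_a`, one
for each line `{i, a, b}` through `i`. In the product of the `i`-th coordinates of `x × y` and
`z × w`, consider the two lines through `i` that contribute a minor each. If they are the same line,
the minors have the same index pair; since each pair of indices lies on a unique line, these terms
add up to the Binet–Cauchy expansion of `⟨x, z⟩⟨y, w⟩ − ⟨x, w⟩⟨y, z⟩`. If they are different, their
remaining four points form the complement of a line, and these terms add up to the Laplace
expansions of the seven `4 × 4` minors in `ψ`.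
-/

section Minors

variable {ι R : Type*} [CommRing R]

/-- The 2-form `e^a ∧ e^b` evaluated on `(x, y)`, that is, the `2 × 2` minor in columns `a`, `b` of
the matrix with rows `x`, `y`; the companion of `w3` and `w4`, over any index type and ring. -/
def w2 (a b : ι) (x y : ι → R) : R := x a * y b - x b * y a

theorem w2_self (a : ι) (x y : ι → R) : w2 a a x y = 0 := by
  rw [w2, sub_self]

theorem w2_swap (a b : ι) (x y : ι → R) : w2 b a x y = -w2 a b x y := by
  rw [w2, w2, neg_sub]

theorem sum_sum_mul_w2 [Fintype ι] (x y z w : ι → R) :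
    ∑ a, ∑ b, x a * y b * w2 a b z w = (x ⬝ᵥ z) * (y ⬝ᵥ w) - (x ⬝ᵥ w) * (y ⬝ᵥ z) := by
  simp only [dotProduct, Finset.sum_mul_sum, ← Finset.sum_sub_distrib, w2]
  refine Finset.sum_congr rfl fun a _ => Finset.sum_congr rfl fun b _ => ?_
  ring

theorem binet_cauchy [Fintype ι] [LinearOrder ι] [LocallyFiniteOrderTop ι]
    [LocallyFiniteOrderBot ι] (x y z w : ι → R) :
    ∑ a, ∑ b ∈ Finset.Ioi a, w2 a b x y * w2 a b z w
      = (x ⬝ᵥ z) * (y ⬝ᵥ w) - (x ⬝ᵥ w) * (y ⬝ᵥ z) := by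
  have symmetrize (a b : ι) :
      w2 a b x y * w2 a b z w = x b * y a * w2 b a z w + x a * y b * w2 a b z w := by
    rw [w2_swap a b z w, w2]
    ring
  have add_diagonal (a : ι) :
      ∑ b ∈ {a}ᶜ, x b * y a * w2 b a z w = ∑ b, x b * y a * w2 b a z w :=
    Finset.sum_subset (Finset.subset_univ _) fun b _ hb => by
      obtain rfl : b = a := by simpa using hb
      rw [w2_self, mul_zero]
  simp only [symmetrize]
  rw [Finset.sum_sum_Ioi_add_eq_sum_sum_off_diag fun b a => x b * y a * w2 b a z w]
  simp only [add_diagonal]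
  rw [Finset.sum_comm, sum_sum_mul_w2]

theorem det_fin_four_eq_w2 (M : Matrix (Fin 4) (Fin 4) R) :
    M.det
      = w2 0 1 (M 0) (M 1) * w2 2 3 (M 2) (M 3) - w2 0 2 (M 0) (M 1) * w2 1 3 (M 2) (M 3)
        + w2 0 3 (M 0) (M 1) * w2 1 2 (M 2) (M 3) + w2 1 2 (M 0) (M 1) * w2 0 3 (M 2) (M 3)
        - w2 1 3 (M 0) (M 1) * w2 0 2 (M 2) (M 3) + w2 2 3 (M 0) (M 1) * w2 0 1 (M 2) (M 3) := by
  rw [Matrix.det_succ_row_zero, Fin.sum_univ_four]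
  simp only [Matrix.det_fin_three, Matrix.submatrix_apply, Fin.succAbove, Fin.reduceSucc,
    Fin.reduceCastSucc, Fin.reduceLT, if_true, if_false, Fin.coe_ofNat_eq_mod, w2]
  ring

end Minors

theorem w4_eq_w2 (a b c d : Fin 7) (x y z w : Fin 7 → ℝ) :
    w4 a b c d x y z w
      = w2 a b x y * w2 c d z w - w2 a c x y * w2 b d z w + w2 a d x y * w2 b c z w
        + w2 b c x y * w2 a d z w - w2 b d x y * w2 a c z w + w2 c d x y * w2 a b z w :=
  det_fin_four_eq_w2 _

/-- The cross product on `ℝ⁷` determined by `⟨u, x × y⟩ = φ(u, x, y)`, see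
`phi_eq_dotProduct_cross`. Index pairs are kept increasing, as in `psi`, so that minors can be
matched without reordering. -/
def cross (x y : Fin 7 → ℝ) : Fin 7 → ℝ :=
  ![w2 1 2 x y + w2 3 4 x y + w2 5 6 x y,
    -w2 0 2 x y + w2 3 5 x y - w2 4 6 x y,
    w2 0 1 x y - w2 3 6 x y - w2 4 5 x y,
    -w2 0 4 x y - w2 1 5 x y + w2 2 6 x y,
    w2 0 3 x y + w2 1 6 x y + w2 2 5 x y,
    -w2 0 6 x y + w2 1 3 x y - w2 2 4 x y,
    w2 0 5 x y - w2 1 4 x y - w2 2 3 x y]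

theorem phi_eq_dotProduct_cross (u x y : Fin 7 → ℝ) : phi u x y = u ⬝ᵥ cross x y := by
  simp only [phi, w3, cross, w2, dotProduct, Fin.sum_univ_seven, Matrix.cons_val]
  ring

theorem cross_dotProduct_cross (x y z w : Fin 7 → ℝ) :
    cross x y ⬝ᵥ cross z w
      = psi x y z w + ∑ a, ∑ b ∈ Finset.Ioi a, w2 a b x y * w2 a b z w := by
  simp only [← Finset.filter_lt_eq_Ioi, Finset.sum_filter, Fin.sum_univ_seven, Fin.reduceLT,
    if_true, if_false]
  simp only [cross, psi, w4_eq_w2, dotProduct, Fin.sum_univ_seven, Matrix.cons_val]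
  ring

theorem e_eq_single (i : Fin 7) : e i = Pi.single i 1 := by
  ext j
  simp [e, Pi.single_apply]

theorem e_dotProduct (i : Fin 7) (v : Fin 7 → ℝ) : e i ⬝ᵥ v = v i := by
  rw [e_eq_single, single_one_dotProduct]

theorem eps_eps_expansion_general (x y z w : Fin 7 → ℝ) :
    ∑ i : Fin 7, phi (e i) x y * phi (e i) z w
      = psi x y z w + (x ⬝ᵥ z) * (y ⬝ᵥ w) - (x ⬝ᵥ w) * (y ⬝ᵥ z) := by
  simp only [phi_eq_dotProduct_cross, e_dotProduct]
  rw [add_sub_assoc, ← binet_cauchy]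
  exact cross_dotProduct_cross x y z w

/-- `Σ_i ε_{ipq} ε_{ijk} = ε_{pqjk} + δ_{pj} δ_{qk} − δ_{pk} δ_{qj}`. -/
theorem eps_eps_expansion (p q j k : Fin 7) :
    ∑ i : Fin 7, eps i p q * eps i j k
      = eps4 p q j k + (if p = j then (1 : ℝ) else 0) * (if q = k then (1 : ℝ) else 0)
          - (if p = k then (1 : ℝ) else 0) * (if q = j then (1 : ℝ) else 0) := by
  simpa only [eps, eps4, e_dotProduct, e] using
    eps_eps_expansion_general (e p) (e q) (e j) (e k)

end G2

end
end

section
/- Every real skew-symmetric 7×7 matrix A admits a unique decomposition A = B + [v], where v ∈ ℝ⁷ and B is a skew-symmetric 7×7 matrix satisfying Σ_{j,k=1}^{7} ε_{ijk} B_{jk} = 0 for every i ∈ {1,…,7}. -/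
open scoped BigOperators Matrix

noncomputable section

namespace G2

/-!
Contracting `[v]` with `ε` multiplies `v` by `6`: in `Σ_{j,k,l} ε_{ijk} ε_{jkl} v_l` only the terms
with `l = i` survive. Hence `v` must be `⟨A⟩ / 6`, and then `B = A - [v]` satisfies `⟨B⟩ = 0`. Since
`[v]` is skew-symmetric, `B` is skew-symmetric exactly when `A` is.
-/

theorem existsUnique_eq_add_of_bijective_comp {X M N : Type*} [AddGroup M] [AddGroup N]
    (g : M →+ N) (f : X → M) (h : Function.Bijective (g ∘ f)) (a : M) :
    ∃! p : M × X, g p.1 = 0 ∧ a = p.1 + f p.2 := by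
  obtain ⟨x, hx, hx_unique⟩ := h.existsUnique (g a)
  refine ⟨(a - f x, x), ⟨?_, (sub_add_cancel a (f x)).symm⟩, ?_⟩
  · rw [map_sub, sub_eq_zero]
    exact hx.symm
  · rintro ⟨b, y⟩ ⟨hb : g b = 0, hab : a = b + f y⟩
    obtain rfl : y = x := hx_unique y (by simp [hab, hb])
    rw [hab, add_sub_cancel_right]

/-- The structure constants `ε_{ijk}` of `φ` as integers, where identities between them can be
checked by evaluation. The local `w a b c` is `e^a ∧ e^b ∧ e^c` at `(e_i, e_j, e_k)`. -/
def epsInt (i j k : Fin 7) : ℤ :=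
  let δ : Fin 7 → Fin 7 → ℤ := fun i a => if a = i then 1 else 0
  let w : Fin 7 → Fin 7 → Fin 7 → ℤ := fun a b c =>
    δ i a * (δ j b * δ k c - δ j c * δ k b) - δ i b * (δ j a * δ k c - δ j c * δ k a)
      + δ i c * (δ j a * δ k b - δ j b * δ k a)
  w 0 1 2 + w 0 3 4 + w 0 5 6 + w 1 3 5 - w 1 4 6 - w 2 3 6 - w 2 4 5

theorem intCast_epsInt (i j k : Fin 7) : (epsInt i j k : ℝ) = eps i j k := by
  simp only [eps, phi, w3, e, epsInt]
  push_cast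
  rfl

theorem eps_swap (i j k : Fin 7) : eps j i k = -eps i j k := by
  simp only [eps, phi, w3]
  ring

theorem eps_rotate (i j k : Fin 7) : eps j k i = eps i j k := by
  simp only [eps, phi, w3]
  ring

-- Two points of the Fano plane lie on a single line, so `j` and `k` determine the third index.
theorem eps_mul_eps_eq_zero_of_ne {i l : Fin 7} (h : i ≠ l) (j k : Fin 7) :
    eps i j k * eps j k l = 0 := by
  have hInt : ∀ i j k l : Fin 7, i ≠ l → epsInt i j k * epsInt j k l = 0 := by decide +kernel
  simp only [← intCast_epsInt]
  exact_mod_cast hInt i j k l h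

-- Each point `i` of the Fano plane lies on three lines, and each line gives two orders of `j, k`.
theorem sum_eps_sq (i : Fin 7) : ∑ j, ∑ k, eps i j k ^ 2 = 6 := by
  have hInt : ∀ i : Fin 7, ∑ j, ∑ k, epsInt i j k ^ 2 = 6 := by decide +kernel
  simp only [← intCast_epsInt]
  exact_mod_cast hInt i

theorem eps_mul_bracket (v : Fin 7 → ℝ) (i j k : Fin 7) :
    eps i j k * bracket v j k = eps i j k ^ 2 * v i := by
  calc eps i j k * bracket v j k
      = ∑ l, eps i j k * eps j k l * v l := by
        simp only [bracket, Matrix.of_apply, Finset.mul_sum, mul_assoc]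
    _ = eps i j k * eps j k i * v i :=
        Fintype.sum_eq_single i fun l hl => by rw [eps_mul_eps_eq_zero_of_ne hl.symm, zero_mul]
    _ = eps i j k ^ 2 * v i := by rw [eps_rotate i j k, sq]

theorem angle_bracket (v : Fin 7 → ℝ) : angle (bracket v) = (6 : ℝ) • v := by
  ext i
  simp only [angle, eps_mul_bracket, ← Finset.sum_mul, sum_eps_sq, Pi.smul_apply, smul_eq_mul]

theorem angle_add (A B : Matrix (Fin 7) (Fin 7) ℝ) : angle (A + B) = angle A + angle B := by
  ext i
  simp only [angle, Matrix.add_apply, mul_add, Finset.sum_add_distrib, Pi.add_apply]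

/-- The contraction `A ↦ ⟨A⟩` as a homomorphism of additive groups. -/
def angleHom : Matrix (Fin 7) (Fin 7) ℝ →+ (Fin 7 → ℝ) :=
  AddMonoidHom.mk' angle angle_add

theorem bijective_angleHom_comp_bracket : Function.Bijective (angleHom ∘ bracket) := by
  have h : angleHom ∘ bracket = fun v => (6 : ℝ) • v := funext angle_bracket
  rw [h]
  exact MulAction.bijective₀ (by norm_num)

theorem transpose_bracket (v : Fin 7 → ℝ) : (bracket v)ᵀ = -bracket v := by
  ext i j
  simp only [bracket, Matrix.transpose_apply, Matrix.of_apply, Matrix.neg_apply, eps_swap i j,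
    neg_mul, Finset.sum_neg_distrib]

theorem transpose_add_bracket_eq_neg_iff (B : Matrix (Fin 7) (Fin 7) ℝ) (v : Fin 7 → ℝ) :
    (B + bracket v)ᵀ = -(B + bracket v) ↔ Bᵀ = -B := by
  rw [Matrix.transpose_add, transpose_bracket, neg_add, add_left_inj]

theorem skew_decomposition_general (A : Matrix (Fin 7) (Fin 7) ℝ) :
    ∃! p : Matrix (Fin 7) (Fin 7) ℝ × (Fin 7 → ℝ),
      (∀ i : Fin 7, ∑ j : Fin 7, ∑ k : Fin 7, eps i j k * p.1 j k = 0) ∧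
      A = p.1 + bracket p.2 := by
  refine (existsUnique_congr fun p => and_congr_left' funext_iff).mp ?_
  exact existsUnique_eq_add_of_bijective_comp angleHom bracket bijective_angleHom_comp_bracket A

/-- every skew-symmetric `7×7` matrix `A` decomposes uniquely as `A = B + [v]`
with `B` skew-symmetric satisfying `Σ_{j,k} ε_{ijk} B_{jk} = 0` for all `i`. -/
theorem skew_decomposition (A : Matrix (Fin 7) (Fin 7) ℝ) (hA : Aᵀ = -A) :
    ∃! p : Matrix (Fin 7) (Fin 7) ℝ × (Fin 7 → ℝ),
      p.1ᵀ = -p.1 ∧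
      (∀ i : Fin 7, ∑ j : Fin 7, ∑ k : Fin 7, eps i j k * p.1 j k = 0) ∧
      A = p.1 + bracket p.2 := by
  refine (existsUnique_congr fun p => ?_).mp (skew_decomposition_general A)
  refine (and_iff_right_of_imp fun ⟨_, h⟩ => ?_).symm
  exact (transpose_add_bracket_eq_neg_iff p.1 p.2).mp (h ▸ hA)

end G2

end
end

section
/- An alternating 2-form β on ℝ⁷ satisfies Σ_{j,k=1}^{7} ε_{ijk} β(e_j,e_k) = 0 for every i ∈ {1,…,7} if and only if for every alternating 2-form η on ℝ⁷ one has η ∧ β ∧ φ = −⟨η,β⟩ · vol, where ⟨η,β⟩ := Σ_{a<b} η(e_a,e_b) β(e_a,e_b). (This characterizes the 14-dimensional summand Λ²₁₄, on which wedging with φ acts as −1 times the Hodge star.) -/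
open scoped BigOperators Matrix

noncomputable section

namespace G2

/-!
The form `η ∧ β ∧ φ` only involves the components of `⋆φ = ψ`: it is
`¼ ∑ η_{ab} β_{cd} ψ_{abcd} · vol`. The contraction identity
`∑ᵢ φ_{iab} φ_{icd} = ψ_{abcd} + δ_{ac} δ_{bd} - δ_{ad} δ_{bc}` turns this into
`η ∧ β ∧ φ = (¼ ⟪angle η, angle β⟫ - ⟨η, β⟩) · vol`. Hence `angle β = 0` gives the wedge formula for
all `η`, and conversely the formula for `η = β` says `‖angle β‖² = 0`.
-/

open Equiv

section Determinants

variable {m n p R : Type*} [Fintype m] [DecidableEq m] [Fintype n] [DecidableEq n]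
  [Fintype p] [DecidableEq p] [CommRing R]

theorem sum_sign_mul_prod_inl_mul_prod_inr (ι : m ⊕ n ≃ p) (A : Matrix p (m ⊕ n) R) :
    ∑ σ : Perm p, ((Perm.sign σ : ℤ) : R) *
      ((∏ i, A (σ (ι (.inl i))) (.inl i)) * ∏ j, A (σ (ι (.inr j))) (.inr j)) =
      (A.submatrix ι id).det := by
  rw [Matrix.det_apply', ← ι.permCongr.sum_comp]
  simp [Fintype.prod_sum_type, Perm.sign_permCongr]

theorem sum_sign_mul_prod_inl_mul_det_inr (ι : m ⊕ n ≃ p) (A : Matrix p (m ⊕ n) R) :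
    ∑ σ : Perm p, ((Perm.sign σ : ℤ) : R) * ((∏ i, A (σ (ι (.inl i))) (.inl i)) *
      (A.submatrix (fun j => σ (ι (.inr j))) .inr).det) =
      (Fintype.card n).factorial * (A.submatrix ι id).det := by
  -- Each term `π` of the inner determinant is absorbed by the substitution `σ ↦ σ * π`.
  have term_eq_det (π : Perm n) : ∑ σ : Perm p, ((Perm.sign σ : ℤ) : R) *
      ((∏ i, A (σ (ι (.inl i))) (.inl i)) *
        (((Perm.sign π : ℤ) : R) * ∏ j, A (σ (ι (.inr (π j)))) (.inr j))) =
      (A.submatrix ι id).det := by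
    rw [← sum_sign_mul_prod_inl_mul_prod_inr,
      ← Equiv.sum_comp (Equiv.mulRight (ι.permCongr (Perm.sumCongr 1 π))) fun σ : Perm p =>
        ((Perm.sign σ : ℤ) : R) *
          ((∏ i, A (σ (ι (.inl i))) (.inl i)) * ∏ j, A (σ (ι (.inr j))) (.inr j))]
    refine Finset.sum_congr rfl fun σ _ => ?_
    simp only [coe_mulRight, Perm.sign_mul, Perm.sign_permCongr, Perm.sign_sumCongr,
      Perm.sign_one, one_mul, Units.val_mul, Int.cast_mul, Perm.coe_mul, Function.comp_apply,
      permCongr_apply, symm_apply_apply, sumCongr_apply, Perm.coe_one, Sum.map_inl, id_eq,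
      Sum.map_inr]
    ring
  simp only [Matrix.det_apply', Matrix.submatrix_apply, Finset.mul_sum] at term_eq_det ⊢
  rw [Finset.sum_comm, Finset.sum_congr rfl fun π _ => term_eq_det π]
  simp [Fintype.card_perm, Finset.mul_sum]

theorem det_submatrix_sumElim (ι : m ⊕ n ≃ p) (τ : Perm p) (v : Matrix p p R) (f : m → p) :
    (v.submatrix ι (Sum.elim f fun j => τ (ι (.inr j)))).det =
      (Perm.sign τ : ℤ) * ((1 : Matrix p p R).submatrix (fun i => τ (ι (.inl i))) f).det *
        v.det := by
  set g : n → p := fun j => τ (ι (.inr j))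
  have factor : v.submatrix ι (Sum.elim f g) = (v.submatrix id τ).submatrix ι ι *
      (1 : Matrix p p R).submatrix (τ ∘ ι) (Sum.elim f g) := by
    simpa using (Matrix.submatrix_mul_equiv v 1 ι (ι.trans τ) (Sum.elim f g)).symm
  have blocks : (1 : Matrix p p R).submatrix (τ ∘ ι) (Sum.elim f g) =
      .fromBlocks ((1 : Matrix p p R).submatrix (fun i => τ (ι (.inl i))) f) 0
        ((1 : Matrix p p R).submatrix g f) 1 := by
    ext (i | i) (j | j)
    · rfl
    · simp [g, Matrix.one_apply]
    · rfl
    · simp [g, Matrix.one_apply]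
  rw [factor, Matrix.det_mul, Matrix.det_submatrix_equiv_self, Matrix.det_permute', blocks,
    Matrix.det_fromBlocks_zero₁₂, Matrix.det_one]
  ring

theorem sum_sign_mul_prod_mul_det_compl (ι : m ⊕ n ≃ p) (τ : Perm p) (v : Matrix p p R)
    (f : m → p) :
    ∑ σ : Perm p, ((Perm.sign σ : ℤ) : R) * ((∏ i, v (σ (ι (.inl i))) (f i)) *
      (v.submatrix (fun j => σ (ι (.inr j))) (fun j => τ (ι (.inr j)))).det) =
      (Fintype.card n).factorial * ((Perm.sign τ : ℤ) *
        ((1 : Matrix p p R).submatrix (fun i => τ (ι (.inl i))) f).det * v.det) := by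
  rw [← det_submatrix_sumElim]
  exact sum_sign_mul_prod_inl_mul_det_inr ι (v.submatrix id (Sum.elim f fun j => τ (ι (.inr j))))

end Determinants

section Sums

variable {ι κ R M : Type*} [Fintype ι]

theorem sum_sum_eq_two_nsmul_sum_lt [LinearOrder ι] [AddCommMonoid M] {f : ι → ι → M}
    (symm : ∀ a b, f b a = f a b) (diag : ∀ a, f a a = 0) :
    ∑ a, ∑ b, f a b = 2 • ∑ a, ∑ b, if a < b then f a b else 0 := by
  have split (a b : ι) :
      f a b = (if a < b then f a b else 0) + if b < a then f b a else 0 := by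
    obtain h | rfl | h := lt_trichotomy a b
    · simp [h, h.not_gt]
    · simp [diag]
    · simp [h, h.not_gt, symm]
  have swap : ∑ a, ∑ b, (if b < a then f b a else 0) = ∑ a, ∑ b, if a < b then f a b else 0 :=
    Finset.sum_comm
  rw [two_nsmul]
  nth_rw 2 [← swap]
  simp only [← Finset.sum_add_distrib, ← split]

theorem sum_mul_sum_sum_comm [Fintype κ] [NonUnitalNonAssocSemiring R] (f g : ι → κ → κ → R) :
    ∑ i, (∑ a, ∑ b, f i a b) * ∑ c, ∑ d, g i c d =
      ∑ a, ∑ b, ∑ c, ∑ d, ∑ i, f i a b * g i c d := by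
  calc
    ∑ i, (∑ a, ∑ b, f i a b) * ∑ c, ∑ d, g i c d
      = ∑ i, ∑ a, ∑ b, ∑ c, ∑ d, f i a b * g i c d := by
        simp only [Finset.sum_mul]
        simp only [Finset.mul_sum]
    _ = ∑ a, ∑ b, ∑ i, ∑ c, ∑ d, f i a b * g i c d := Finset.sum_comm_cycle.symm
    _ = ∑ a, ∑ b, ∑ c, ∑ d, ∑ i, f i a b * g i c d :=
        Finset.sum_congr rfl fun _ _ => Finset.sum_congr rfl fun _ _ => Finset.sum_comm_cycle.symm

theorem multilinear_apply_eq_sum [DecidableEq ι] [Fintype κ] [DecidableEq κ] [CommSemiring R]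
    [AddCommMonoid M] [Module R M] (f : MultilinearMap R (fun _ : ι => κ → R) M) (x : ι → κ → R) :
    f x = ∑ r : ι → κ, (∏ i, x i (r i)) • f fun i => Pi.single (r i) 1 := by
  have basis_expansion : x = fun i => ∑ k, x i k • Pi.single k (1 : R) := by
    ext i k
    simp [Finset.sum_apply, Pi.single_apply]
  conv_lhs => rw [basis_expansion, f.map_sum]
  simp only [f.map_smul_univ]

end Sums

section TwoForms

theorem alternating_swap {R M N : Type*} [Semiring R] [AddCommMonoid M] [Module R M]
    [AddCommGroup N] [Module R N] (η : M [⋀^Fin 2]→ₗ[R] N) (x y : M) :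
    η ![y, x] = -η ![x, y] := by
  rw [← η.map_swap ![x, y] (zero_ne_one : (0 : Fin 2) ≠ 1)]
  congr 1
  ext i
  fin_cases i <;> rfl

theorem sum_sum_alternating_mul {ι R M : Type*} [Fintype ι] [LinearOrder ι] [CommRing R]
    [AddCommMonoid M] [Module R M] (η β : M [⋀^Fin 2]→ₗ[R] R) (x : ι → M) :
    ∑ a, ∑ b, η ![x a, x b] * β ![x a, x b] =
      2 * ∑ a, ∑ b, if a < b then η ![x a, x b] * β ![x a, x b] else 0 := by
  rw [sum_sum_eq_two_nsmul_sum_lt, nsmul_eq_mul, Nat.cast_ofNat]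
  · exact fun a b => by rw [alternating_swap η, alternating_swap β, neg_mul_neg]
  · intro a
    rw [η.map_eq_zero_of_eq ![x a, x a] (i := 0) (j := 1) rfl zero_ne_one, zero_mul]

/-- The antisymmetric matrix `(η(e_a, e_b))_{ab}` of components of a 2-form `η`, with no factor
`1/2`, so that the contraction of `η` with `φ` is `angle (coeffMatrix η)`. -/
def coeffMatrix (η : (Fin 7 → ℝ) [⋀^Fin 2]→ₗ[ℝ] ℝ) : Matrix (Fin 7) (Fin 7) ℝ :=
  .of fun a b => η ![e a, e b]

variable (η β : (Fin 7 → ℝ) [⋀^Fin 2]→ₗ[ℝ] ℝ)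

theorem coeffMatrix_transpose : (coeffMatrix η)ᵀ = -coeffMatrix η :=
  Matrix.ext fun a b => alternating_swap η (e a) (e b)

theorem alternating_apply_eq_sum (x y : Fin 7 → ℝ) :
    η ![x, y] = ∑ a, ∑ b, coeffMatrix η a b * (x a * y b) := by
  have expand := multilinear_apply_eq_sum η.toMultilinearMap ![x, y]
  rw [← (finTwoArrowEquiv (Fin 7)).symm.sum_comp, Fintype.sum_prod_type] at expand
  have basis_pair (a b : Fin 7) : (fun i => Pi.single (![a, b] i) 1) = ![e a, e b] := by
    ext i j
    fin_cases i <;> simp [e, Pi.single_apply]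
  simpa [basis_pair, coeffMatrix, mul_comm] using expand

theorem wedge223_eq_sum (C : (Fin 7 → ℝ) → (Fin 7 → ℝ) → (Fin 7 → ℝ) → ℝ)
    (v : Fin 7 → Fin 7 → ℝ) :
    wedge223 (fun x y => η ![x, y]) (fun x y => β ![x, y]) C v =
      (1 / 24) * ∑ a, ∑ b, ∑ c, ∑ d, coeffMatrix η a b * coeffMatrix β c d *
        ∑ σ : Perm (Fin 7), ((Perm.sign σ : ℤ) : ℝ) *
          (v (σ 0) a * v (σ 1) b * (v (σ 2) c * v (σ 3) d) *
            C (v (σ 4)) (v (σ 5)) (v (σ 6))) := by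
  let f (σ : Perm (Fin 7)) (a b : Fin 7) : ℝ :=
    (Perm.sign σ : ℤ) * (coeffMatrix η a b * (v (σ 0) a * v (σ 1) b))
  let g (σ : Perm (Fin 7)) (c d : Fin 7) : ℝ :=
    coeffMatrix β c d * (v (σ 2) c * v (σ 3) d) * C (v (σ 4)) (v (σ 5)) (v (σ 6))
  have factor : wedge223 (fun x y => η ![x, y]) (fun x y => β ![x, y]) C v =
      1 / 24 * ∑ σ, (∑ a, ∑ b, f σ a b) * ∑ c, ∑ d, g σ c d := by
    simp only [f, g, ← Finset.mul_sum, ← Finset.sum_mul, ← alternating_apply_eq_sum]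
    simp only [wedge223, mul_assoc]
  rw [factor, sum_mul_sum_sum_comm]
  simp only [Finset.mul_sum, f, g]
  congr! 6
  ring

end TwoForms

section HodgeDual

theorem det_submatrix_of_eq_w3 {ι : Type*} (v : ι → Fin 7 → ℝ) (r : Fin 3 → ι)
    (s : Fin 3 → Fin 7) :
    ((Matrix.of v).submatrix r s).det =
      w3 (s 0) (s 1) (s 2) (v (r 0)) (v (r 1)) (v (r 2)) := by
  simp only [Matrix.det_fin_three, Matrix.submatrix_apply, Matrix.of_apply, w3]
  ring

theorem det_one_submatrix_eq_w4 (l s : Fin 4 → Fin 7) :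
    ((1 : Matrix (Fin 7) (Fin 7) ℝ).submatrix l s).det =
      w4 (l 0) (l 1) (l 2) (l 3) (e (s 0)) (e (s 1)) (e (s 2)) (e (s 3)) := by
  rw [w4, ← Matrix.det_transpose]
  congr 1
  ext i j
  fin_cases i <;> fin_cases j <;> rfl

variable (v : Fin 7 → Fin 7 → ℝ) (a b c d : Fin 7)

theorem sum_sign_mul_w3 {t : Fin 7 → Fin 7} (ht : t.Bijective)
    (even : Perm.sign (Equiv.ofBijective t ht) = 1) :
    ∑ σ : Perm (Fin 7), ((Perm.sign σ : ℤ) : ℝ) *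
      (v (σ 0) a * v (σ 1) b * (v (σ 2) c * v (σ 3) d) *
        w3 (t 4) (t 5) (t 6) (v (σ 4)) (v (σ 5)) (v (σ 6))) =
      6 * (w4 (t 0) (t 1) (t 2) (t 3) (e a) (e b) (e c) (e d) * vol v) := by
  have key := sum_sign_mul_prod_mul_det_compl (finSumFinEquiv : Fin 4 ⊕ Fin 3 ≃ Fin 7)
    (Equiv.ofBijective t ht) (.of v) ![a, b, c, d]
  rw [det_one_submatrix_eq_w4, even, Units.val_one, Int.cast_one, one_mul] at key
  refine (Finset.sum_congr rfl fun σ _ => ?_).trans key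
  rw [det_submatrix_of_eq_w3, Fin.prod_univ_four]
  simp only [mul_assoc]
  rfl

theorem sum_sign_mul_phi :
    ∑ σ : Perm (Fin 7), ((Perm.sign σ : ℤ) : ℝ) *
      (v (σ 0) a * v (σ 1) b * (v (σ 2) c * v (σ 3) d) *
        phi (v (σ 4)) (v (σ 5)) (v (σ 6))) =
      6 * (eps4 a b c d * vol v) := by
  -- Each `t` lists the indices of a monomial of `ψ`, then those of the complementary one of `φ`.
  have h012 := sum_sign_mul_w3 v a b c d (t := ![3, 4, 5, 6, 0, 1, 2]) (by decide) (by decide)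
  have h034 := sum_sign_mul_w3 v a b c d (t := ![1, 2, 5, 6, 0, 3, 4]) (by decide) (by decide)
  have h056 := sum_sign_mul_w3 v a b c d (t := ![1, 2, 3, 4, 0, 5, 6]) (by decide) (by decide)
  have h135 := sum_sign_mul_w3 v a b c d (t := ![0, 2, 4, 6, 1, 3, 5]) (by decide) (by decide)
  have h146 := sum_sign_mul_w3 v a b c d (t := ![0, 2, 3, 5, 1, 4, 6]) (by decide) (by decide)
  have h236 := sum_sign_mul_w3 v a b c d (t := ![0, 1, 4, 5, 2, 3, 6]) (by decide) (by decide)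
  have h245 := sum_sign_mul_w3 v a b c d (t := ![0, 1, 3, 6, 2, 4, 5]) (by decide) (by decide)
  simp only [phi, eps4, psi, add_mul, sub_mul, mul_add, mul_sub, Finset.sum_add_distrib,
    Finset.sum_sub_distrib]
  exact congr($h012 + $h034 + $h056 + $h135 - $h146 - $h236 - $h245)

theorem wedge223_phi_eq_sum_eps4 (η β : (Fin 7 → ℝ) [⋀^Fin 2]→ₗ[ℝ] ℝ) :
    wedge223 (fun x y => η ![x, y]) (fun x y => β ![x, y]) phi v =
      (1 / 4) * (∑ a, ∑ b, ∑ c, ∑ d, coeffMatrix η a b * coeffMatrix β c d * eps4 a b c d) *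
        vol v := by
  simp only [wedge223_eq_sum, sum_sign_mul_phi, Finset.mul_sum, Finset.sum_mul]
  congr! 4
  ring

end HodgeDual

section Contraction

theorem w4_eq_laplace_expansion (a b c d : Fin 7) (x y z w : Fin 7 → ℝ) :
    w4 a b c d x y z w =
      x a * w3 b c d y z w - x b * w3 a c d y z w + x c * w3 a b d y z w -
        x d * w3 a b c y z w := by
  have as_submatrix : !![x a, x b, x c, x d; y a, y b, y c, y d; z a, z b, z c, z d;
      w a, w b, w c, w d] = (Matrix.of ![x, y, z, w]).submatrix id ![a, b, c, d] := by
    ext i j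
    fin_cases i <;> fin_cases j <;> rfl
  rw [w4, as_submatrix, Matrix.det_succ_row_zero, Fin.sum_univ_four]
  simp only [Matrix.submatrix_submatrix, det_submatrix_of_eq_w3]
  change (-1) ^ 0 * x a * w3 b c d y z w + (-1) ^ 1 * x b * w3 a c d y z w +
    (-1) ^ 2 * x c * w3 a b d y z w + (-1) ^ 3 * x d * w3 a b c y z w = _
  ring

theorem sum_phi_mul_phi (x y z w : Fin 7 → ℝ) :
    ∑ i, phi (e i) x y * phi (e i) z w =
      psi x y z w + (x ⬝ᵥ z) * (y ⬝ᵥ w) - (x ⬝ᵥ w) * (y ⬝ᵥ z) := by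
  simp only [dotProduct, Fin.sum_univ_seven, phi, psi, w3, w4_eq_laplace_expansion, e,
    Fin.reduceEq, ↓reduceIte]
  ring

theorem sum_eps_mul_eps (a b c d : Fin 7) :
    ∑ i, eps i a b * eps i c d =
      eps4 a b c d + (if b = d ∧ a = c then 1 else 0) - (if b = c ∧ a = d then 1 else 0) := by
  simpa [eps, eps4, e, dotProduct, eq_comm, ite_and] using sum_phi_mul_phi (e a) (e b) (e c) (e d)

theorem angle_dotProduct_angle (A B : Matrix (Fin 7) (Fin 7) ℝ) :
    angle A ⬝ᵥ angle B = (∑ a, ∑ b, ∑ c, ∑ d, A a b * B c d * eps4 a b c d) +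
      (∑ a, ∑ b, A a b * B a b) - ∑ a, ∑ b, A a b * Bᵀ a b := by
  have expand : angle A ⬝ᵥ angle B =
      ∑ a, ∑ b, ∑ c, ∑ d, A a b * B c d * ∑ i, eps i a b * eps i c d := by
    simp only [angle, dotProduct]
    rw [sum_mul_sum_sum_comm]
    simp only [Finset.mul_sum]
    congr! 5
    ring
  rw [expand]
  simp [sum_eps_mul_eps, mul_add, mul_sub, Finset.sum_add_distrib, ite_and]

end Contraction

theorem wedge223_phi_eq_mul_vol (η β : (Fin 7 → ℝ) [⋀^Fin 2]→ₗ[ℝ] ℝ) (v : Fin 7 → Fin 7 → ℝ) :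
    wedge223 (fun x y => η ![x, y]) (fun x y => β ![x, y]) phi v =
      ((1 / 4) * (angle (coeffMatrix η) ⬝ᵥ angle (coeffMatrix β)) -
        ∑ a, ∑ b, if a < b then η ![e a, e b] * β ![e a, e b] else 0) * vol v := by
  have inner : ∑ a, ∑ b, coeffMatrix η a b * coeffMatrix β a b =
      2 * ∑ a, ∑ b, if a < b then η ![e a, e b] * β ![e a, e b] else 0 :=
    sum_sum_alternating_mul η β e
  have contraction := angle_dotProduct_angle (coeffMatrix η) (coeffMatrix β)
  simp only [coeffMatrix_transpose, Matrix.neg_apply, mul_neg, Finset.sum_neg_distrib]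
    at contraction
  rw [wedge223_phi_eq_sum_eps4]
  linear_combination (-1 / 4 * vol v) * contraction - (1 / 2 * vol v) * inner

theorem vol_e : vol e = 1 := by
  rw [vol, ← Matrix.det_one (n := Fin 7)]
  congr 1
  ext i j
  simp [e, Matrix.one_apply, eq_comm]

/-- an alternating 2-form `β` satisfies `Σ_{j,k} ε_{ijk} β(e_j,e_k) = 0` for
every `i` iff `η ∧ β ∧ φ = −⟨η,β⟩·vol` for every alternating 2-form `η`. -/
theorem mem_Lambda2_14_iff (β : AlternatingMap ℝ (Fin 7 → ℝ) ℝ (Fin 2)) :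
    (∀ i : Fin 7, ∑ j : Fin 7, ∑ k : Fin 7, eps i j k * β ![e j, e k] = 0) ↔
    (∀ η : AlternatingMap ℝ (Fin 7 → ℝ) ℝ (Fin 2), ∀ v : Fin 7 → (Fin 7 → ℝ),
      wedge223 (fun x y => η ![x, y]) (fun x y => β ![x, y]) phi v
        = -(∑ a : Fin 7, ∑ b : Fin 7,
              if a < b then η ![e a, e b] * β ![e a, e b] else 0) * vol v) := by
  have angle_eq_zero_iff :
      angle (coeffMatrix β) = 0 ↔ ∀ i, ∑ j, ∑ k, eps i j k * β ![e j, e k] = 0 := funext_iff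
  rw [← angle_eq_zero_iff]
  constructor
  · intro h η v
    simp [wedge223_phi_eq_mul_vol, h]
  · intro h
    have self_wedge := h β e
    rw [wedge223_phi_eq_mul_vol, vol_e] at self_wedge
    exact dotProduct_self_eq_zero.mp (by linarith)

end G2

end
end

section
/- For every symmetric bilinear form h on ℝ⁷ one has j_φ(i_φ(h)) = 8h + 4·tr(h)·⟨·,·⟩; that is, for all v, w ∈ ℝ⁷, j_φ(i_φ(h))(v,w) = 8 h(v,w) + 4 (Σ_{i=1}^{7} h(e_i,e_i)) ⟨v,w⟩. -/
open scoped BigOperators Matrix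

noncomputable section

namespace G2

/-!
Let `A` be the endomorphism with matrix `h`, acting on forms as a derivation. Then
`i_φ(h) = 2 δ` for `δ = A · φ`. The Leibniz rule for the 7-form `(v ⌟ φ) ∧ (w ⌟ φ) ∧ φ`, on which
`A` acts by `tr A`, expresses the sum of three terms, in each of which one factor `φ` has been
replaced by `δ`. To isolate the last one, contract the vanishing 8-form `(v ⌟ φ) ∧ δ ∧ φ` with `w`:
this gives `(v ⌟ φ) ∧ (w ⌟ φ) ∧ δ - (v ⌟ φ) ∧ (w ⌟ δ) ∧ φ` as a multiple of
`(w ⌟ v ⌟ φ) ∧ δ ∧ φ`, which is antisymmetric in `v` and `w`, so that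
`2 (v ⌟ φ) ∧ (w ⌟ φ) ∧ δ = (v ⌟ δ) ∧ (w ⌟ φ) ∧ φ + (v ⌟ φ) ∧ (w ⌟ δ) ∧ φ`.
Writing `(v ⌟ φ) ∧ (w ⌟ φ) ∧ φ = B(v, w) vol`, it follows that
`3 (v ⌟ φ) ∧ (w ⌟ φ) ∧ δ = (tr A * B(v, w) + B(A v, w) + B(v, A w)) vol`.
Finally `B(v, w) = 6 ⟨v, w⟩`: each of the seven lines of the Fano plane of `φ` contributes
`2 ∑ v_i w_i` over its three points, and every point lies on three lines.
-/

/-! ### Antisymmetrisation -/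

section Alternation

variable {R : Type*} [CommRing R] {ι κ M : Type*} [Fintype ι] [DecidableEq ι] [Fintype κ]
  [DecidableEq κ]

/-- The unnormalised antisymmetrisation `v ↦ ∑ σ, sign σ * F (v ∘ σ)` of an arbitrary function of
a tuple, as a linear operator in `F`. No division by `(card ι)!` is made and `F` need not be
multilinear, so that it also makes sense over a ring and before multilinearity is established. -/
def alternation : ((ι → M) → R) →ₗ[R] (ι → M) → R where
  toFun F v := ∑ σ : Equiv.Perm ι, ((Equiv.Perm.sign σ : ℤ) : R) * F (v ∘ σ)
  map_add' F G := by
    funext v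
    simp only [Pi.add_apply, mul_add, Finset.sum_add_distrib]
  map_smul' c F := by
    funext v
    simp only [Pi.smul_apply, smul_eq_mul, Finset.mul_sum, mul_left_comm _ c, RingHom.id_apply]

theorem alternation_apply (F : (ι → M) → R) (v : ι → M) :
    alternation F v = ∑ σ : Equiv.Perm ι, ((Equiv.Perm.sign σ : ℤ) : R) * F (v ∘ σ) :=
  rfl

theorem alternation_comp_perm (F : (ι → M) → R) (v : ι → M) (τ : Equiv.Perm ι) :
    alternation F (v ∘ τ) = ((Equiv.Perm.sign τ : ℤ) : R) * alternation F v := by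
  have sign_sq : ((Equiv.Perm.sign τ : ℤ) : R) * ((Equiv.Perm.sign τ : ℤ) : R) = 1 := by
    rw [← Int.cast_mul, ← Units.val_mul, Int.units_mul_self, Units.val_one, Int.cast_one]
  simp only [alternation_apply, Finset.mul_sum]
  refine Fintype.sum_equiv (Equiv.mulLeft τ) _ _ fun σ => ?_
  rw [Equiv.coe_mulLeft, Equiv.Perm.sign_mul, Units.val_mul, Int.cast_mul, ← mul_assoc,
    ← mul_assoc, sign_sq, one_mul, Equiv.Perm.coe_mul, Function.comp_assoc]

theorem alternation_reindex (F : (ι → M) → R) (v : ι → M) (f : ι ≃ κ) :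
    alternation F v = alternation (fun u : κ → M => F (u ∘ f)) (v ∘ f.symm) := by
  simp only [alternation_apply]
  refine Fintype.sum_equiv f.permCongr _ _ fun σ => ?_
  rw [Equiv.Perm.sign_permCongr]
  congr 2
  ext i
  simp

theorem alternation_precomp_perm (F : (ι → M) → R) (v : ι → M) (τ : Equiv.Perm ι) :
    alternation (fun u => F (u ∘ τ)) v = ((Equiv.Perm.sign τ : ℤ) : R) * alternation F v := by
  rw [← alternation_comp_perm, alternation_reindex F (v ∘ τ) τ, Function.comp_assoc,
    Equiv.self_comp_symm, Function.comp_id]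

theorem sum_alternation_update (F : (ι → M) → R) (A : M → M) (v : ι → M) :
    ∑ i, alternation F (Function.update v i (A (v i)))
      = alternation (fun u => ∑ i, F (Function.update u i (A (u i)))) v := by
  simp only [alternation_apply, Finset.mul_sum]
  rw [Finset.sum_comm]
  refine Finset.sum_congr rfl fun σ _ => (Fintype.sum_equiv σ _ _ fun i => ?_).symm
  rw [Function.update_comp_equiv, σ.symm_apply_apply, Function.comp_apply]

theorem alternation_cons {n : ℕ} (F : (Fin (n + 1) → M) → R) (x : M) (v : Fin n → M) :
    alternation F (Fin.cons x v)
      = alternation (fun u => ∑ p : Fin (n + 1), (-1) ^ (p : ℕ) * F (p.insertNth x u)) v := by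
  -- A permutation `σ` of `Fin (n + 1)` is a slot `p = σ⁻¹ 0` for `x` and a permutation of the rest.
  let extend : Equiv.Perm (Fin n) × Fin (n + 1) → Equiv.Perm (Fin (n + 1)) :=
    fun q => Equiv.Perm.decomposeFin.symm (0, q.1) * q.2.cycleRange
  have extend_symm_zero : ∀ q, (extend q).symm 0 = q.2 := fun q => by
    rw [Equiv.symm_apply_eq]
    simp [extend]
  have extend_bijective : Function.Bijective extend := by
    rw [Fintype.bijective_iff_injective_and_card]
    refine ⟨fun q r h => ?_, by simp [Fintype.card_perm, Nat.factorial_succ, mul_comm]⟩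
    have slot : q.2 = r.2 := by rw [← extend_symm_zero q, h, extend_symm_zero r]
    have rest : Equiv.Perm.decomposeFin.symm (0, q.1) = Equiv.Perm.decomposeFin.symm (0, r.1) := by
      simpa [extend, slot] using h
    exact Prod.ext (congrArg Prod.snd (Equiv.Perm.decomposeFin.symm.injective rest)) slot
  simp only [alternation_apply, Finset.mul_sum]
  rw [← Fintype.sum_prod_type', ← extend_bijective.sum_comp]
  refine Finset.sum_congr rfl fun q _ => ?_
  have cons_comp : (Fin.cons x v : Fin (n + 1) → M) ∘ extend q
      = q.2.insertNth x (v ∘ q.1) := by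
    have : (Fin.cons x v : Fin (n + 1) → M) ∘ Equiv.Perm.decomposeFin.symm (0, q.1)
        = Fin.cons x (v ∘ q.1) := by
      funext i
      refine Fin.cases ?_ (fun i => ?_) i <;> simp
    rw [← Fin.cons_comp_cycleRange, ← this]
    rfl
  rw [cons_comp, Equiv.Perm.sign_mul, Equiv.Perm.decomposeFin.symm_sign, Fin.sign_cycleRange]
  push_cast
  simp only [↓reduceIte, Units.val_one, Int.cast_one, one_mul]
  ring

theorem alternation_sum_mul (F : (ι → M) → R) (G : (κ → M) → R) (v : ι ⊕ κ → M)
    (hG : ∀ u k i, u k = v (Sum.inl i) → G u = 0) :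
    alternation (fun u : ι ⊕ κ → M => F (u ∘ Sum.inl) * G (u ∘ Sum.inr)) v
      = alternation F (v ∘ Sum.inl) * alternation G (v ∘ Sum.inr) := by
  simp only [alternation_apply]
  rw [Fintype.sum_mul_sum, ← Fintype.sum_prod_type', eq_comm]
  refine Fintype.sum_of_injective (Equiv.Perm.sumCongrHom ι κ)
    Equiv.Perm.sumCongrHom_injective _ _ (fun σ hσ => ?_) fun q => ?_
  · obtain ⟨k, i, hki⟩ : ∃ k i, σ (Sum.inr k) = Sum.inl i := by
      have hσ' := mt Equiv.Perm.mem_sumCongrHom_range_of_perm_mapsTo_inl hσ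
      rw [Equiv.Perm.perm_mapsTo_inl_iff_mapsTo_inr] at hσ'
      obtain ⟨k, hk⟩ : ∃ k, ∀ k', Sum.inr k' ≠ σ (Sum.inr k) := by
        simpa [Set.MapsTo] using hσ'
      cases hσk : σ (Sum.inr k) with
      | inl i => exact ⟨k, i, hσk⟩
      | inr k' => exact absurd hσk.symm (hk k')
    rw [hG _ k i (by simp [hki]), mul_zero, mul_zero]
  · have inl : (v ∘ Equiv.Perm.sumCongrHom ι κ q) ∘ Sum.inl = (v ∘ Sum.inl) ∘ q.1 := rfl
    have inr : (v ∘ Equiv.Perm.sumCongrHom ι κ q) ∘ Sum.inr = (v ∘ Sum.inr) ∘ q.2 := rfl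
    rw [inl, inr, Equiv.Perm.sumCongrHom_apply, Equiv.Perm.sign_sumCongr]
    push_cast
    ring

theorem alternation_fin_three (T : M → M → M → R) (x y z : M) :
    alternation (fun u : Fin 3 → M => T (u 0) (u 1) (u 2)) ![x, y, z]
      = T x y z + T y z x + T z x y - T y x z - T x z y - T z y x := by
  have univ_perm : (Finset.univ : Finset (Equiv.Perm (Fin 3))) =
      {1, Equiv.swap 0 1 * Equiv.swap 1 2, Equiv.swap 1 2 * Equiv.swap 0 1, Equiv.swap 0 1,
        Equiv.swap 1 2, Equiv.swap 0 2} := by decide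
  rw [alternation_apply, univ_perm, Finset.sum_insert (by decide), Finset.sum_insert (by decide),
    Finset.sum_insert (by decide), Finset.sum_insert (by decide), Finset.sum_pair (by decide)]
  simp only [Equiv.Perm.sign_one, Equiv.Perm.sign_mul, Equiv.Perm.sign_swap', Function.comp_apply,
    Equiv.Perm.coe_one, id_eq, Equiv.Perm.coe_mul, Equiv.swap_apply_def, Fin.reduceEq, zero_ne_one,
    one_ne_zero, ↓reduceIte, Units.val_one, Units.val_neg, Int.cast_one, Int.cast_neg,
    Matrix.cons_val, mul_neg, mul_one, neg_neg]
  ring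

end Alternation

section TopForm

variable {R V : Type*} [CommRing R] [AddCommGroup V] [Module R V] {ι : Type*} [Fintype ι]
  [DecidableEq ι]

theorem alternation_eq_alternatization (F : MultilinearMap R (fun _ : ι => V) R) :
    alternation F = MultilinearMap.alternatization F := by
  ext v
  simp only [alternation_apply, MultilinearMap.alternatization_apply, Units.smul_def,
    zsmul_eq_mul, MultilinearMap.domDomCongr_apply]
  rfl

theorem alternation_alternatingMap (f : V [⋀^ι]→ₗ[R] R) (v : ι → V) :
    alternation f v = (Fintype.card ι).factorial * f v := by
  have := congrArg (· v) (AlternatingMap.coe_alternatization f)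
  rw [← alternation_eq_alternatization] at this
  simpa using this

theorem alternation_eq_mul_basis_det (b : Module.Basis ι R V)
    (F : MultilinearMap R (fun _ : ι => V) R) (v : ι → V) :
    alternation F v = alternation F b * b.det v := by
  rw [alternation_eq_alternatization]
  exact congrArg (· v) ((MultilinearMap.alternatization F).eq_smul_basis_det b)

theorem sum_map_update_basis_eq_trace_mul (f : V [⋀^ι]→ₗ[R] R) (b : Module.Basis ι R V)
    (A : V →ₗ[R] V) :
    ∑ i, f (Function.update b i (A (b i))) = LinearMap.trace R V A * f b := by
  rw [LinearMap.trace_eq_matrix_trace R b, Matrix.trace, Finset.sum_mul]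
  refine Finset.sum_congr rfl fun i _ => ?_
  nth_rw 1 [← b.sum_repr (A (b i))]
  rw [f.map_update_sum, Finset.sum_eq_single i]
  · rw [f.map_update_smul, Function.update_eq_self, smul_eq_mul, Matrix.diag_apply,
      LinearMap.toMatrix_apply]
  · intro j _ hji
    rw [f.map_update_smul, f.map_update_self _ hji.symm, smul_zero]
  · exact fun h => absurd (Finset.mem_univ i) h

theorem alternation_sum_update_basis (F : MultilinearMap R (fun _ : ι => V) R)
    (b : Module.Basis ι R V) (A : V →ₗ[R] V) :
    alternation (fun u => ∑ i, F (Function.update u i (A (u i)))) b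
      = LinearMap.trace R V A * alternation F b := by
  rw [← sum_alternation_update, alternation_eq_alternatization,
    sum_map_update_basis_eq_trace_mul]

/-- The tensor product of two scalar-valued multilinear maps: the first `m` vectors are fed to `f`
and the last `n` to `g`. -/
def tensorForm {m n : ℕ} (f : MultilinearMap R (fun _ : Fin m => V) R)
    (g : MultilinearMap R (fun _ : Fin n => V) R) :
    MultilinearMap R (fun _ : Fin (m + n) => V) R :=
  (LinearMap.mul' R R).compMultilinearMap ((f.domCoprod g).domDomCongr finSumFinEquiv)

theorem tensorForm_apply {m n : ℕ} (f : MultilinearMap R (fun _ : Fin m => V) R)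
    (g : MultilinearMap R (fun _ : Fin n => V) R) (u : Fin (m + n) → V) :
    tensorForm f g u = f (fun i => u (Fin.castAdd n i)) * g (fun j => u (Fin.natAdd m j)) := by
  simp [tensorForm]

end TopForm

section Forms

variable {R V : Type*} [CommRing R] [AddCommGroup V] [Module R V]

theorem alternatingMap_sum_apply {ι : Type*} {n : ℕ} (s : Finset ι) (f : ι → V [⋀^Fin n]→ₗ[R] R)
    (u : Fin n → V) : (∑ i ∈ s, f i) u = ∑ i ∈ s, f i u := by
  induction s using Finset.cons_induction with
  | empty => rfl
  | cons i s hi ih => rw [Finset.sum_cons, Finset.sum_cons, AlternatingMap.add_apply, ih]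

theorem twoForm_swap (α : V [⋀^Fin 2]→ₗ[R] R) (x y : V) : α ![y, x] = -α ![x, y] := by
  have insert : Fin.insertNth 1 x ![y] = ![y, x] := by
    ext i
    fin_cases i <;> rfl
  simpa [insert] using α.map_insertNth 1 x ![y]

theorem threeForm_swap (γ : V [⋀^Fin 3]→ₗ[R] R) (x y z : V) : γ ![y, x, z] = -γ ![x, y, z] := by
  have insert : Fin.insertNth 1 x ![y, z] = ![y, x, z] := by
    ext i
    fin_cases i <;> rfl
  simpa [insert] using γ.map_insertNth 1 x ![y, z]

theorem threeForm_rotate (γ : V [⋀^Fin 3]→ₗ[R] R) (x y z : V) : γ ![y, z, x] = γ ![x, y, z] := by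
  have insert : Fin.insertNth 2 x ![y, z] = ![y, z, x] := by
    ext i
    fin_cases i <;> rfl
  simpa [insert] using γ.map_insertNth 2 x ![y, z]

/-- The derivation action `(A · B)(x, y) = B(Ax, y) + B(x, Ay)` of an endomorphism on 2-forms, here
for plain functions so that it applies to contractions such as `phi v`. -/
def act₂ (A : V → V) (B : V → V → R) (x y : V) : R :=
  B (A x) y + B x (A y)

/-- The derivation action of an endomorphism on 3-forms, the analogue of `act₂`. -/
def act₃ (A : V → V) (C : V → V → V → R) (x y z : V) : R :=
  C (A x) y z + C x (A y) z + C x y (A z)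

/-- `α ⊗ β ⊗ γ` for two 2-forms and a 3-form. -/
def tensorForm₂₂₃ (α β : V [⋀^Fin 2]→ₗ[R] R) (γ : V [⋀^Fin 3]→ₗ[R] R) :
    MultilinearMap R (fun _ : Fin 7 => V) R :=
  tensorForm (tensorForm α.toMultilinearMap β.toMultilinearMap) γ.toMultilinearMap

/-- `β ⊗ γ₁ ⊗ γ₂` for a 2-form and two 3-forms. -/
def tensorForm₂₃₃ (β : V [⋀^Fin 2]→ₗ[R] R) (γ₁ γ₂ : V [⋀^Fin 3]→ₗ[R] R) :
    MultilinearMap R (fun _ : Fin 8 => V) R :=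
  tensorForm (tensorForm β.toMultilinearMap γ₁.toMultilinearMap) γ₂.toMultilinearMap

theorem coe_tensorForm₂₂₃ (α β : V [⋀^Fin 2]→ₗ[R] R) (γ : V [⋀^Fin 3]→ₗ[R] R) :
    ⇑(tensorForm₂₂₃ α β γ) = fun u => α ![u 0, u 1] * β ![u 2, u 3] * γ ![u 4, u 5, u 6] := by
  funext u
  have two (f : Fin 2 → V) : f = ![f 0, f 1] := (FinVec.etaExpand_eq f).symm
  have three (f : Fin 3 → V) : f = ![f 0, f 1, f 2] := (FinVec.etaExpand_eq f).symm
  rw [tensorForm₂₂₃, tensorForm_apply, tensorForm_apply]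
  exact congrArg₂ (· * ·) (congrArg₂ (· * ·) (congrArg α (two _)) (congrArg β (two _)))
    (congrArg γ (three _))

theorem coe_tensorForm₂₃₃ (β : V [⋀^Fin 2]→ₗ[R] R) (γ₁ γ₂ : V [⋀^Fin 3]→ₗ[R] R) :
    ⇑(tensorForm₂₃₃ β γ₁ γ₂)
      = fun u => β ![u 0, u 1] * γ₁ ![u 2, u 3, u 4] * γ₂ ![u 5, u 6, u 7] := by
  funext u
  have two (f : Fin 2 → V) : f = ![f 0, f 1] := (FinVec.etaExpand_eq f).symm
  have three (f : Fin 3 → V) : f = ![f 0, f 1, f 2] := (FinVec.etaExpand_eq f).symm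
  rw [tensorForm₂₃₃, tensorForm_apply, tensorForm_apply]
  exact congrArg₂ (· * ·) (congrArg₂ (· * ·) (congrArg β (two _)) (congrArg γ₁ (three _)))
    (congrArg γ₂ (three _))

theorem sum_insertNth_tensorForm₂₃₃ (β : V [⋀^Fin 2]→ₗ[R] R) (γ₁ γ₂ : V [⋀^Fin 3]→ₗ[R] R)
    (x : V) (u : Fin 7 → V) :
    ∑ p : Fin 8, (-1) ^ (p : ℕ) * tensorForm₂₃₃ β γ₁ γ₂ (p.insertNth x u)
      = 2 * (β ![x, u 0] * γ₁ ![u 1, u 2, u 3] * γ₂ ![u 4, u 5, u 6])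
        + 3 * (β ![u 0, u 1] * γ₁ ![x, u 2, u 3] * γ₂ ![u 4, u 5, u 6])
        - 3 * (β ![u 0, u 1] * γ₁ ![u 2, u 3, u 4] * γ₂ ![x, u 5, u 6]) := by
  rw [coe_tensorForm₂₃₃]
  calc
    _ = (-1) ^ 0 * (β ![x, u 0] * γ₁ ![u 1, u 2, u 3] * γ₂ ![u 4, u 5, u 6])
        + (-1) ^ 1 * (β ![u 0, x] * γ₁ ![u 1, u 2, u 3] * γ₂ ![u 4, u 5, u 6])
        + (-1) ^ 2 * (β ![u 0, u 1] * γ₁ ![x, u 2, u 3] * γ₂ ![u 4, u 5, u 6])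
        + (-1) ^ 3 * (β ![u 0, u 1] * γ₁ ![u 2, x, u 3] * γ₂ ![u 4, u 5, u 6])
        + (-1) ^ 4 * (β ![u 0, u 1] * γ₁ ![u 2, u 3, x] * γ₂ ![u 4, u 5, u 6])
        + (-1) ^ 5 * (β ![u 0, u 1] * γ₁ ![u 2, u 3, u 4] * γ₂ ![x, u 5, u 6])
        + (-1) ^ 6 * (β ![u 0, u 1] * γ₁ ![u 2, u 3, u 4] * γ₂ ![u 5, x, u 6])
        + (-1) ^ 7 * (β ![u 0, u 1] * γ₁ ![u 2, u 3, u 4] * γ₂ ![u 5, u 6, x]) :=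
      by rw [Fin.sum_univ_eight]; rfl
    _ = _ := by
      rw [twoForm_swap β x (u 0), threeForm_swap γ₁ x (u 2) (u 3), threeForm_rotate γ₁ x,
        threeForm_swap γ₂ x (u 5), threeForm_rotate γ₂ x]
      ring

end Forms

/-! ### Wedge products of two 2-forms and a 3-form -/

section Wedge

theorem coe_basisFun_eq_e : ⇑(Pi.basisFun ℝ (Fin 7)) = e := by
  ext i j
  simp [e, Pi.single_apply]

section

variable (A A' B : (Fin 7 → ℝ) → (Fin 7 → ℝ) → ℝ)
  (C : (Fin 7 → ℝ) → (Fin 7 → ℝ) → (Fin 7 → ℝ) → ℝ) (vs : Fin 7 → (Fin 7 → ℝ))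

theorem wedge22_eq_alternation (v : Fin 4 → (Fin 7 → ℝ)) :
    wedge22 A B v = 1 / 4 * alternation (fun u => A (u 0) (u 1) * B (u 2) (u 3)) v := by
  simp only [wedge22, alternation_apply, Function.comp_apply]

theorem wedge223_eq_alternation :
    wedge223 A B C vs = 1 / 24 *
      alternation (fun u => A (u 0) (u 1) * B (u 2) (u 3) * C (u 4) (u 5) (u 6)) vs := by
  simp only [wedge223, alternation_apply, Function.comp_apply]

theorem wedge223_comp_perm (τ : Equiv.Perm (Fin 7)) :
    wedge223 A B C (vs ∘ τ) = ((Equiv.Perm.sign τ : ℤ) : ℝ) * wedge223 A B C vs := by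
  rw [wedge223_eq_alternation, wedge223_eq_alternation, alternation_comp_perm, mul_left_comm]

theorem wedge223_comm : wedge223 A B C vs = wedge223 B A C vs := by
  let τ : Equiv.Perm (Fin 7) := Equiv.swap 0 2 * Equiv.swap 1 3
  have sign_τ : Equiv.Perm.sign τ = 1 := by decide
  have reorder := alternation_precomp_perm
    (fun u => A (u 0) (u 1) * B (u 2) (u 3) * C (u 4) (u 5) (u 6)) vs τ
  rw [sign_τ, Units.val_one, Int.cast_one, one_mul] at reorder
  rw [wedge223_eq_alternation, wedge223_eq_alternation, ← reorder]
  refine congrArg (fun F => 1 / 24 * alternation F vs) (funext fun u => ?_)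
  exact congrArg (· * _) (mul_comm _ _)

theorem wedge223_sub_left :
    wedge223 (A - A') B C vs = wedge223 A B C vs - wedge223 A' B C vs := by
  simp only [wedge223, Pi.sub_apply, sub_mul, mul_sub, Finset.sum_sub_distrib]

theorem wedge223_smul_right (c : ℝ) : wedge223 A B (c • C) vs = c * wedge223 A B C vs := by
  simp only [wedge223, Pi.smul_apply, smul_eq_mul, Finset.mul_sum, mul_left_comm _ c]

theorem wedge223_sum_right {ι : Type*} (s : Finset ι)
    (D : ι → (Fin 7 → ℝ) → (Fin 7 → ℝ) → (Fin 7 → ℝ) → ℝ) :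
    wedge223 A B (∑ k ∈ s, D k) vs = ∑ k ∈ s, wedge223 A B (D k) vs := by
  simp only [wedge223, Finset.sum_apply, Finset.mul_sum]
  exact Finset.sum_comm

end

variable (α β : (Fin 7 → ℝ) [⋀^Fin 2]→ₗ[ℝ] ℝ) (γ γ₁ γ₂ : (Fin 7 → ℝ) [⋀^Fin 3]→ₗ[ℝ] ℝ)

theorem wedge223_eq_mul_vol (vs : Fin 7 → (Fin 7 → ℝ)) :
    wedge223 (α ![·, ·]) (β ![·, ·]) (γ ![·, ·, ·]) vs
      = wedge223 (α ![·, ·]) (β ![·, ·]) (γ ![·, ·, ·]) e * vol vs := by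
  have top := alternation_eq_mul_basis_det (Pi.basisFun ℝ (Fin 7))
    (tensorForm₂₂₃ α β γ) vs
  simp only [coe_basisFun_eq_e, Pi.basisFun_det_apply, coe_tensorForm₂₂₃] at top
  rw [wedge223_eq_alternation, wedge223_eq_alternation, mul_assoc]
  exact congrArg _ top

theorem trace_mul_wedge223 (A : (Fin 7 → ℝ) →ₗ[ℝ] (Fin 7 → ℝ)) :
    LinearMap.trace ℝ _ A * wedge223 (α ![·, ·]) (β ![·, ·]) (γ ![·, ·, ·]) e
      = wedge223 (act₂ A (α ![·, ·])) (β ![·, ·]) (γ ![·, ·, ·]) e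
        + wedge223 (α ![·, ·]) (act₂ A (β ![·, ·])) (γ ![·, ·, ·]) e
        + wedge223 (α ![·, ·]) (β ![·, ·]) (act₃ A (γ ![·, ·, ·])) e := by
  have leibniz := alternation_sum_update_basis (tensorForm₂₂₃ α β γ) (Pi.basisFun ℝ (Fin 7)) A
  simp only [coe_basisFun_eq_e, coe_tensorForm₂₂₃] at leibniz
  simp only [wedge223_eq_alternation, ← mul_add, mul_left_comm _ (1 / 24 : ℝ)]
  rw [← leibniz, ← Pi.add_apply, ← Pi.add_apply, ← map_add, ← map_add]
  refine congrArg (fun F => 1 / 24 * alternation F e) (funext fun u => ?_)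
  refine (Fin.sum_univ_seven _).trans ?_
  simp only [act₂, act₃, Pi.add_apply, Function.update, ↓reduceDIte, Fin.reduceEq, zero_ne_one,
    one_ne_zero]
  ring

theorem wedge223_sub_wedge223_eq_alternation (x : Fin 7 → ℝ) (vs : Fin 7 → (Fin 7 → ℝ)) :
    wedge223 (β ![·, ·]) (γ₂.curryLeft x ![·, ·]) (γ₁ ![·, ·, ·]) vs
        - wedge223 (β ![·, ·]) (γ₁.curryLeft x ![·, ·]) (γ₂ ![·, ·, ·]) vs
      = 1 / 36 *
        alternation (fun u => β ![x, u 0] * γ₁ ![u 1, u 2, u 3] * γ₂ ![u 4, u 5, u 6]) vs := by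
  let F : (Fin 7 → Fin 7 → ℝ) → ℝ := fun u =>
    β ![x, u 0] * γ₁ ![u 1, u 2, u 3] * γ₂ ![u 4, u 5, u 6]
  let F₁ : (Fin 7 → Fin 7 → ℝ) → ℝ := fun u =>
    β ![u 0, u 1] * γ₁ ![x, u 2, u 3] * γ₂ ![u 4, u 5, u 6]
  let F₂ : (Fin 7 → Fin 7 → ℝ) → ℝ := fun u =>
    β ![u 0, u 1] * γ₂ ![x, u 2, u 3] * γ₁ ![u 4, u 5, u 6]
  let F₂' : (Fin 7 → Fin 7 → ℝ) → ℝ := fun u =>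
    β ![u 0, u 1] * γ₁ ![u 2, u 3, u 4] * γ₂ ![x, u 5, u 6]
  have vanish : 2 * alternation F vs + 3 * alternation F₁ vs - 3 * alternation F₂' vs = 0 := by
    have dependent : alternation (tensorForm₂₃₃ β γ₁ γ₂) (Fin.cons x vs) = 0 := by
      rw [alternation_eq_alternatization]
      refine AlternatingMap.map_linearDependent _ _ fun h => ?_
      simpa using h.fintype_card_le_finrank
    rw [alternation_cons, funext (sum_insertNth_tensorForm₂₃₃ β γ₁ γ₂ x)] at dependent
    change alternation ((2 : ℝ) • F + (3 : ℝ) • F₁ - (3 : ℝ) • F₂') vs = 0 at dependent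
    rwa [map_sub, map_add, map_smul, map_smul, map_smul] at dependent
  have reorder : alternation F₂' vs = alternation F₂ vs := by
    let τ : Equiv.Perm (Fin 7) :=
      ⟨![0, 1, 5, 6, 2, 3, 4], ![0, 1, 4, 5, 6, 2, 3], by decide, by decide⟩
    have sign_τ : Equiv.Perm.sign τ = 1 := by decide
    have F₂_comp : (fun u => F₂ (u ∘ τ)) = F₂' := funext fun u => mul_right_comm _ _ _
    rw [← F₂_comp, alternation_precomp_perm, sign_τ, Units.val_one, Int.cast_one, one_mul]
  rw [wedge223_eq_alternation, wedge223_eq_alternation]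
  change 1 / 24 * alternation F₂ vs - 1 / 24 * alternation F₁ vs = 1 / 36 * alternation F vs
  linarith

end Wedge

section Derivation

variable (γ γ₁ γ₂ : (Fin 7 → ℝ) [⋀^Fin 3]→ₗ[ℝ] ℝ) (v w : Fin 7 → ℝ)

theorem two_mul_wedge223_curryLeft (vs : Fin 7 → (Fin 7 → ℝ)) :
    2 * wedge223 (γ₂.curryLeft v ![·, ·]) (γ₂.curryLeft w ![·, ·]) (γ₁ ![·, ·, ·]) vs
      = wedge223 (γ₁.curryLeft v ![·, ·]) (γ₂.curryLeft w ![·, ·]) (γ₂ ![·, ·, ·]) vs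
        + wedge223 (γ₂.curryLeft v ![·, ·]) (γ₁.curryLeft w ![·, ·]) (γ₂ ![·, ·, ·]) vs := by
  have hvw := wedge223_sub_wedge223_eq_alternation (γ₂.curryLeft v) γ₁ γ₂ w vs
  have hwv := wedge223_sub_wedge223_eq_alternation (γ₂.curryLeft w) γ₁ γ₂ v vs
  have antisymm : alternation (fun u => γ₂.curryLeft w ![v, u 0] * γ₁ ![u 1, u 2, u 3]
        * γ₂ ![u 4, u 5, u 6]) vs
      = -alternation (fun u => γ₂.curryLeft v ![w, u 0] * γ₁ ![u 1, u 2, u 3]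
        * γ₂ ![u 4, u 5, u 6]) vs := by
    rw [← Pi.neg_apply, ← map_neg]
    refine congrArg (fun F => alternation F vs) (funext fun u => ?_)
    have swap : γ₂.curryLeft w ![v, u 0] = -γ₂.curryLeft v ![w, u 0] :=
      threeForm_swap γ₂ v w (u 0)
    rw [swap, neg_mul, neg_mul, Pi.neg_apply]
  rw [wedge223_comm, wedge223_comm (γ₂.curryLeft w ![·, ·]), antisymm] at hwv
  linarith

theorem three_mul_wedge223_act₃ (A : (Fin 7 → ℝ) →ₗ[ℝ] (Fin 7 → ℝ))
    (hγ : (γ₁ ![·, ·, ·]) = act₃ A (γ ![·, ·, ·])) :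
    3 * wedge223 (γ.curryLeft v ![·, ·]) (γ.curryLeft w ![·, ·]) (γ₁ ![·, ·, ·]) e
      = LinearMap.trace ℝ _ A
          * wedge223 (γ.curryLeft v ![·, ·]) (γ.curryLeft w ![·, ·]) (γ ![·, ·, ·]) e
        + wedge223 (γ.curryLeft (A v) ![·, ·]) (γ.curryLeft w ![·, ·]) (γ ![·, ·, ·]) e
        + wedge223 (γ.curryLeft v ![·, ·]) (γ.curryLeft (A w) ![·, ·]) (γ ![·, ·, ·]) e := by
  have act₂_curryLeft (u : Fin 7 → ℝ) : act₂ A (γ.curryLeft u ![·, ·])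
      = (γ₁.curryLeft u ![·, ·]) - (γ.curryLeft (A u) ![·, ·]) := by
    funext x y
    have := congrFun (congrFun (congrFun hγ u) x) y
    change _ = γ₁ ![u, x, y] - γ ![A u, x, y]
    simp only [this, act₃]
    change γ ![u, A x, y] + γ ![u, x, A y] = _
    ring
  have leibniz := trace_mul_wedge223 (γ.curryLeft v) (γ.curryLeft w) γ A
  have polar := two_mul_wedge223_curryLeft γ₁ γ v w e
  rw [act₂_curryLeft, act₂_curryLeft, ← hγ, wedge223_sub_left,
    wedge223_comm (γ.curryLeft v ![·, ·]) (_ - _), wedge223_sub_left,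
    wedge223_comm _ (γ.curryLeft v ![·, ·]), wedge223_comm _ (γ.curryLeft v ![·, ·])] at leibniz
  linarith

end Derivation

/-! ### Decomposable 3-forms -/

theorem wedge22_eq_six_terms (α β : (Fin 7 → ℝ) [⋀^Fin 2]→ₗ[ℝ] ℝ) (v : Fin 4 → (Fin 7 → ℝ)) :
    wedge22 (α ![·, ·]) (β ![·, ·]) v
      = α ![v 0, v 1] * β ![v 2, v 3] - α ![v 0, v 2] * β ![v 1, v 3]
        + α ![v 0, v 3] * β ![v 1, v 2] + α ![v 1, v 2] * β ![v 0, v 3]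
        - α ![v 1, v 3] * β ![v 0, v 2] + α ![v 2, v 3] * β ![v 0, v 1] := by
  have contract (u : Fin 3 → (Fin 7 → ℝ)) :
      ∑ p : Fin 4, (-1) ^ (p : ℕ) * (fun u : Fin 4 → (Fin 7 → ℝ) =>
        α ![u 0, u 1] * β ![u 2, u 3]) (p.insertNth (v 0) u)
      = 2 * (α ![v 0, u 0] * β ![u 1, u 2] + α ![u 0, u 1] * β ![v 0, u 2]) := by
    calc
      _ = (-1) ^ 0 * (α ![v 0, u 0] * β ![u 1, u 2]) + (-1) ^ 1 * (α ![u 0, v 0] * β ![u 1, u 2])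
          + (-1) ^ 2 * (α ![u 0, u 1] * β ![v 0, u 2])
          + (-1) ^ 3 * (α ![u 0, u 1] * β ![u 2, v 0]) := by
        rw [Fin.sum_univ_four]
        rfl
      _ = _ := by
        rw [twoForm_swap α (v 0), twoForm_swap β (v 0)]
        ring
  have split : v = Fin.cons (v 0) ![v 1, v 2, v 3] := by
    ext i
    fin_cases i <;> rfl
  have three := alternation_fin_three (fun a b c : Fin 7 → ℝ =>
    2 * (α ![v 0, a] * β ![b, c] + α ![a, b] * β ![v 0, c])) (v 1) (v 2) (v 3)
  rw [wedge22_eq_alternation, split, alternation_cons, funext contract]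
  refine (congrArg (1 / 4 * ·) three).trans ?_
  change _ = α ![v 0, v 1] * β ![v 2, v 3] - α ![v 0, v 2] * β ![v 1, v 3]
        + α ![v 0, v 3] * β ![v 1, v 2] + α ![v 1, v 2] * β ![v 0, v 3]
        - α ![v 1, v 3] * β ![v 0, v 2] + α ![v 2, v 3] * β ![v 0, v 1]
  rw [twoForm_swap α (v 1) (v 2), twoForm_swap α (v 1) (v 3), twoForm_swap α (v 2) (v 3),
    twoForm_swap β (v 1) (v 2), twoForm_swap β (v 1) (v 3), twoForm_swap β (v 2) (v 3)]
  ring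

/-- The decomposable 3-form `e^a ∧ e^b ∧ e^c` as a bundled alternating map. -/
def w3Form (a b c : Fin 7) : (Fin 7 → ℝ) [⋀^Fin 3]→ₗ[ℝ] ℝ :=
  Matrix.detRowAlternating.compLinearMap (LinearMap.funLeft ℝ ℝ ![a, b, c])

theorem w3Form_apply (a b c : Fin 7) (x y z : Fin 7 → ℝ) :
    w3Form a b c ![x, y, z] = w3 a b c x y z := by
  have := Matrix.det_fin_three (Matrix.of fun i j => (![x, y, z] i) (![a, b, c] j))
  refine Eq.trans this ?_
  simp only [w3, Matrix.of_apply, Matrix.cons_val]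
  ring

theorem w3Form_eq_zero {a b c d : Fin 7} (ha : a ≠ d) (hb : b ≠ d) (hc : c ≠ d)
    {u : Fin 3 → (Fin 7 → ℝ)} {k : Fin 3} (hu : u k = e d) : w3Form a b c u = 0 := by
  refine Matrix.det_eq_zero_of_row_eq_zero k fun j => ?_
  have off : ∀ j, ![a, b, c] j ≠ d := by
    simp [Fin.forall_fin_succ, ha, hb, hc]
  rw [LinearMap.funLeft_apply, hu, e, if_neg (off j)]

theorem wedge223_eq_wedge22_mul (A B : (Fin 7 → ℝ) → (Fin 7 → ℝ) → ℝ)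
    (γ : (Fin 7 → ℝ) [⋀^Fin 3]→ₗ[ℝ] ℝ) (vs : Fin 7 → (Fin 7 → ℝ))
    (hγ : ∀ (u : Fin 3 → (Fin 7 → ℝ)) (k : Fin 3) (i : Fin 4),
      u k = vs (Fin.castAdd 3 i) → γ u = 0) :
    wedge223 A B (γ ![·, ·, ·]) vs
      = wedge22 A B (fun i => vs (Fin.castAdd 3 i)) * γ ![vs 4, vs 5, vs 6] := by
  let f : Fin 4 ⊕ Fin 3 ≃ Fin 7 := finSumFinEquiv
  have coe_γ : (fun u => γ ![u 0, u 1, u 2]) = γ :=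
    funext fun u => congrArg γ (FinVec.etaExpand_eq u)
  have block := alternation_sum_mul (fun u : Fin 4 → Fin 7 → ℝ => A (u 0) (u 1) * B (u 2) (u 3))
    (fun u => γ ![u 0, u 1, u 2]) (vs ∘ f)
    fun u k i hu => (congrFun coe_γ u).trans (hγ u k i hu)
  have antisymm : alternation (fun u => γ ![u 0, u 1, u 2]) ((vs ∘ f) ∘ Sum.inr)
      = 6 * γ ![vs 4, vs 5, vs 6] := by
    rw [coe_γ, alternation_alternatingMap, ← coe_γ]
    rfl
  rw [antisymm] at block
  rw [wedge223_eq_alternation, wedge22_eq_alternation, alternation_reindex _ vs f.symm, f.symm_symm]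
  refine (congrArg (1 / 24 * ·) block).trans ?_
  change 1 / 24 * (alternation _ (fun i => vs (Fin.castAdd 3 i)) * _) = _
  ring

theorem wedge223_w3Form (A B : (Fin 7 → ℝ) → (Fin 7 → ℝ) → ℝ) (τ : Equiv.Perm (Fin 7)) :
    wedge223 A B (w3 (τ 4) (τ 5) (τ 6)) (e ∘ τ)
      = wedge22 A B (fun i => e (τ (Fin.castAdd 3 i))) := by
  have off (i : Fin 4) (k : Fin 3) : τ (Fin.natAdd 4 k) ≠ τ (Fin.castAdd 3 i) := by
    rw [τ.injective.ne_iff, Fin.ne_iff_vne, Fin.val_natAdd, Fin.val_castAdd]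
    omega
  have block := wedge223_eq_wedge22_mul A B (w3Form (τ 4) (τ 5) (τ 6)) (e ∘ τ)
    fun _ _ i hu => w3Form_eq_zero (off i 0) (off i 1) (off i 2) hu
  have one : w3 (τ 4) (τ 5) (τ 6) (e (τ 4)) (e (τ 5)) (e (τ 6)) = 1 := by
    simp [w3, e]
  simp only [w3Form_apply, Function.comp_apply, one, mul_one] at block
  exact block

/-! ### The Fano plane of `φ` -/

/-- For each of the seven lines `{a, b, c}` of the Fano plane underlying `φ`, an even permutation
listing first the four indices off the line and then `a`, `b`, `c`. -/
def fanoOrdering : Fin 7 → Equiv.Perm (Fin 7) :=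
  ![⟨![3, 4, 5, 6, 0, 1, 2], ![4, 5, 6, 0, 1, 2, 3], by decide, by decide⟩,
    ⟨![1, 2, 5, 6, 0, 3, 4], ![4, 0, 1, 5, 6, 2, 3], by decide, by decide⟩,
    ⟨![1, 2, 3, 4, 0, 5, 6], ![4, 0, 1, 2, 3, 5, 6], by decide, by decide⟩,
    ⟨![0, 2, 4, 6, 1, 3, 5], ![0, 4, 1, 5, 2, 6, 3], by decide, by decide⟩,
    ⟨![0, 2, 3, 5, 1, 4, 6], ![0, 4, 1, 2, 5, 3, 6], by decide, by decide⟩,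
    ⟨![0, 1, 4, 5, 2, 3, 6], ![0, 1, 4, 5, 2, 3, 6], by decide, by decide⟩,
    ⟨![0, 1, 3, 6, 2, 4, 5], ![0, 1, 4, 2, 5, 6, 3], by decide, by decide⟩]

/-- The coefficient in `φ` of the line listed by `fanoOrdering`. -/
def fanoSign : Fin 7 → ℝ := ![1, 1, 1, 1, -1, -1, -1]

theorem sign_fanoOrdering : ∀ k, Equiv.Perm.sign (fanoOrdering k) = 1 := by
  decide

theorem phi_eq_sum_fano (x y z : Fin 7 → ℝ) :
    phi x y z = ∑ k, fanoSign k
      * w3 (fanoOrdering k 4) (fanoOrdering k 5) (fanoOrdering k 6) x y z := by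
  simp only [phi, fanoSign, fanoOrdering, Fin.sum_univ_seven, Equiv.coe_fn_mk, Matrix.cons_val,
    one_mul, neg_mul]
  ring

theorem sum_fano (f : Fin 7 → ℝ) :
    ∑ k, (f (fanoOrdering k 4) + f (fanoOrdering k 5) + f (fanoOrdering k 6)) = 3 * ∑ i, f i := by
  simp only [fanoOrdering, Fin.sum_univ_seven, Equiv.coe_fn_mk, Matrix.cons_val]
  ring

/-- `φ` as a bundled alternating map. -/
def phiForm : (Fin 7 → ℝ) [⋀^Fin 3]→ₗ[ℝ] ℝ :=
  ∑ k, fanoSign k • w3Form (fanoOrdering k 4) (fanoOrdering k 5) (fanoOrdering k 6)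

theorem phiForm_apply (x y z : Fin 7 → ℝ) : phiForm ![x, y, z] = phi x y z := by
  rw [phi_eq_sum_fano]
  simp only [phiForm, alternatingMap_sum_apply, AlternatingMap.smul_apply, w3Form_apply,
    smul_eq_mul]

-- Any two lines of the Fano plane meet. So on the span of the four basis vectors off a
-- line, `e d ⌟ φ` vanishes for `d` off the line, while for `d` on the line these forms are
-- (anti-)self-dual, mutually orthogonal and of square norm 2.
theorem wedge22_phi_fano (v w : Fin 7 → ℝ) (k : Fin 7) :
    wedge22 (phi v) (phi w) (fun i => e (fanoOrdering k (Fin.castAdd 3 i)))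
      = 2 * fanoSign k * (v (fanoOrdering k 4) * w (fanoOrdering k 4)
        + v (fanoOrdering k 5) * w (fanoOrdering k 5)
        + v (fanoOrdering k 6) * w (fanoOrdering k 6)) := by
  have six := wedge22_eq_six_terms (phiForm.curryLeft v) (phiForm.curryLeft w)
    (fun i => e (fanoOrdering k (Fin.castAdd 3 i)))
  simp only [AlternatingMap.curryLeft_apply_apply, phiForm_apply] at six
  refine six.trans ?_
  fin_cases k <;>
    simp only [fanoOrdering, fanoSign, phi, w3, e, Fin.zero_eta, Fin.mk_one, Fin.reduceFinMk,
      Fin.reduceCastAdd, Equiv.coe_fn_mk, Matrix.cons_val, Fin.reduceEq, zero_ne_one, one_ne_zero,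
      ↓reduceIte, mul_zero, mul_one] <;>
    ring

theorem wedge223_phi_phi_phi (v w : Fin 7 → ℝ) :
    wedge223 (phi v) (phi w) phi e = 6 * ∑ i, v i * w i := by
  have line (k : Fin 7) : wedge223 (phi v) (phi w)
        (w3 (fanoOrdering k 4) (fanoOrdering k 5) (fanoOrdering k 6)) e
      = wedge22 (phi v) (phi w) (fun i => e (fanoOrdering k (Fin.castAdd 3 i))) := by
    rw [← wedge223_w3Form, wedge223_comp_perm, sign_fanoOrdering, Units.val_one, Int.cast_one,
      one_mul]
  have sign_sq (k : Fin 7) : fanoSign k * fanoSign k = 1 := by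
    fin_cases k <;> simp [fanoSign]
  calc wedge223 (phi v) (phi w) phi e
      = ∑ k, fanoSign k * wedge223 (phi v) (phi w)
          (w3 (fanoOrdering k 4) (fanoOrdering k 5) (fanoOrdering k 6)) e := by
        simp only [← wedge223_smul_right, ← wedge223_sum_right]
        congr 1
        funext x y z
        simp [phi_eq_sum_fano]
    _ = ∑ k, 2 * (v (fanoOrdering k 4) * w (fanoOrdering k 4)
          + v (fanoOrdering k 5) * w (fanoOrdering k 5)
          + v (fanoOrdering k 6) * w (fanoOrdering k 6)) := by
        refine Finset.sum_congr rfl fun k _ => ?_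
        rw [line, wedge22_phi_fano, mul_comm 2, ← mul_assoc, ← mul_assoc, sign_sq, one_mul]
    _ = 6 * ∑ i, v i * w i := by
        rw [← Finset.mul_sum, sum_fano fun i => v i * w i]
        ring

theorem phi_rotate (x y z : Fin 7 → ℝ) : phi y z x = phi x y z := by
  simpa only [phiForm_apply] using threeForm_rotate phiForm x y z

theorem phi_swap (x y z : Fin 7 → ℝ) : phi y x z = -phi x y z := by
  simpa only [phiForm_apply] using threeForm_swap phiForm x y z

theorem phi_eq_sum_eps (x y z : Fin 7 → ℝ) :
    phi x y z = ∑ i, ∑ k, ∑ l, eps i k l * (x i * y k * z l) := by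
  have expand_left (x y z : Fin 7 → ℝ) : phi x y z = ∑ i, x i * phi (e i) y z := by
    simp only [phi, w3, e, Fin.sum_univ_seven, Fin.reduceEq, zero_ne_one, one_ne_zero, ↓reduceIte,
      ite_mul, one_mul, zero_mul]
    ring
  simp only [expand_left x, ← phi_rotate (e _) y z, expand_left y, ← phi_rotate (e _) z,
    expand_left z, Finset.mul_sum, eps]
  refine Finset.sum_congr rfl fun i _ => Finset.sum_congr rfl fun k _ =>
    Finset.sum_congr rfl fun l _ => ?_
  rw [phi_rotate (e l)]
  ring

/-! ### `i_φ(h)` as a derivative of `φ` -/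

section

variable (h : Fin 7 → Fin 7 → ℝ)

/-- `i_φ(h)` as a bundled alternating map. -/
def iphiForm : (Fin 7 → ℝ) [⋀^Fin 3]→ₗ[ℝ] ℝ :=
  ∑ i, ∑ j, ∑ k, ∑ l, (eps i k l * h i j) • w3Form j k l

theorem iphiForm_apply (x y z : Fin 7 → ℝ) : iphiForm h ![x, y, z] = iphi h x y z := by
  simp only [iphiForm, iphi, alternatingMap_sum_apply, AlternatingMap.smul_apply, w3Form_apply,
    smul_eq_mul]

theorem phi_toLin' (x y z : Fin 7 → ℝ) :
    phi (Matrix.toLin' (Matrix.of h) x) y z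
      = ∑ i, ∑ j, ∑ k, ∑ l, eps i k l * h i j * (x j * y k * z l) := by
  rw [phi_eq_sum_eps]
  simp only [Matrix.toLin'_apply, Matrix.mulVec, dotProduct, Matrix.of_apply, Finset.sum_mul,
    Finset.mul_sum]
  refine Finset.sum_congr rfl fun i _ => ?_
  rw [Finset.sum_comm_cycle]
  refine Finset.sum_congr rfl fun j _ => Finset.sum_congr rfl fun k _ =>
    Finset.sum_congr rfl fun l _ => ?_
  ring

theorem iphi_eq_two_smul_act₃ :
    iphi h = (2 : ℝ) • act₃ (Matrix.toLin' (Matrix.of h)) phi := by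
  funext x y z
  have expand : iphi h x y z = phi (Matrix.toLin' (Matrix.of h) x) y z
      - phi (Matrix.toLin' (Matrix.of h) x) z y - phi (Matrix.toLin' (Matrix.of h) y) x z
      + phi (Matrix.toLin' (Matrix.of h) y) z x + phi (Matrix.toLin' (Matrix.of h) z) x y
      - phi (Matrix.toLin' (Matrix.of h) z) y x := by
    simp only [phi_toLin', iphi, w3, ← Finset.sum_add_distrib, ← Finset.sum_sub_distrib]
    refine Finset.sum_congr rfl fun i _ => Finset.sum_congr rfl fun j _ =>
      Finset.sum_congr rfl fun k _ => Finset.sum_congr rfl fun l _ => ?_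
    ring
  have swap_right (x y z : Fin 7 → ℝ) : phi x z y = -phi x y z := by
    rw [← phi_rotate, phi_swap, phi_rotate]
  rw [expand, swap_right _ y z, phi_swap x, phi_rotate x, ← phi_rotate _ x y,
    phi_rotate x _ y, swap_right x y]
  change _ = 2 * (phi _ y z + phi x _ z + phi x y _)
  ring

theorem sum_toLin'_mul_add_sum_mul_toLin' (v w : Fin 7 → ℝ) :
    ∑ i, Matrix.toLin' (Matrix.of h) v i * w i + ∑ i, v i * Matrix.toLin' (Matrix.of h) w i
      = ∑ i, ∑ j, (h i j + h j i) * v i * w j := by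
  simp only [Matrix.toLin'_apply, Matrix.mulVec, dotProduct, Matrix.of_apply, Finset.sum_mul,
    Finset.mul_sum, add_mul, Finset.sum_add_distrib]
  rw [add_comm, Finset.sum_comm (f := fun i j => h i j * v j * w i)]
  simp only [mul_assoc, mul_left_comm (v _)]

theorem wedge223_phi_phi_iphi (v w : Fin 7 → ℝ) :
    wedge223 (phi v) (phi w) (iphi h) e
      = 4 * (∑ i, ∑ j, (h i j + h j i) * v i * w j) + 4 * (∑ i, h i i) * ∑ i, v i * w i := by
  let A := Matrix.toLin' (Matrix.of h)
  have half_iphi : (((1 / 2 : ℝ) • iphiForm h) ![·, ·, ·]) = act₃ A (phiForm ![·, ·, ·]) := by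
    funext x y z
    simp only [AlternatingMap.smul_apply, iphiForm_apply, phiForm_apply, iphi_eq_two_smul_act₃,
      Pi.smul_apply, smul_smul, A]
    norm_num
  have derivation := three_mul_wedge223_act₃ phiForm _ v w A half_iphi
  simp only [AlternatingMap.curryLeft_apply_apply, AlternatingMap.smul_apply, phiForm_apply,
    iphiForm_apply] at derivation
  change 3 * wedge223 (phi v) (phi w) ((1 / 2 : ℝ) • iphi h) e = _ at derivation
  rw [wedge223_smul_right, wedge223_phi_phi_phi, wedge223_phi_phi_phi, wedge223_phi_phi_phi,
    Matrix.trace_toLin'_eq] at derivation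
  rw [← sum_toLin'_mul_add_sum_mul_toLin']
  change _ = 4 * (∑ i, A v i * w i + ∑ i, v i * A w i) + 4 * (Matrix.of h).trace * _
  linarith

theorem jphi_iphi_general (v w : Fin 7 → ℝ) (vs : Fin 7 → (Fin 7 → ℝ)) :
    wedge223 (fun x y => phi v x y) (fun x y => phi w x y) (iphi h) vs
      = (4 * (∑ i : Fin 7, ∑ j : Fin 7, (h i j + h j i) * v i * w j)
          + 4 * (∑ i : Fin 7, h i i) * (∑ i : Fin 7, v i * w i)) * vol vs := by
  have top := wedge223_eq_mul_vol (phiForm.curryLeft v) (phiForm.curryLeft w) (iphiForm h) vs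
  simp only [AlternatingMap.curryLeft_apply_apply, phiForm_apply, iphiForm_apply] at top
  rw [← wedge223_phi_phi_iphi]
  exact top

end

/-- `j_φ(i_φ(h)) = 8h + 4·tr(h)·⟨·,·⟩`.  Here `j_φ(γ)(v,w)` is defined as the
unique real number `c` with `(v⌟φ) ∧ (w⌟φ) ∧ γ = c·vol`, so the statement asserts that
`(v⌟φ) ∧ (w⌟φ) ∧ i_φ(h) = (8 h(v,w) + 4 tr(h) ⟨v,w⟩)·vol` as 7-forms. -/
theorem jphi_iphi (h : Fin 7 → Fin 7 → ℝ) (hsym : ∀ i j : Fin 7, h i j = h j i)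
    (v w : Fin 7 → ℝ) (vs : Fin 7 → (Fin 7 → ℝ)) :
    wedge223 (fun x y => phi v x y) (fun x y => phi w x y) (iphi h) vs
      = (8 * (∑ i : Fin 7, ∑ j : Fin 7, h i j * v i * w j)
          + 4 * (∑ i : Fin 7, h i i) * (∑ i : Fin 7, v i * w i)) * vol vs := by
  have double (i j : Fin 7) : h i j + h j i = 2 * h i j := by rw [hsym j i, two_mul]
  simp only [jphi_iphi_general, double, mul_assoc, ← Finset.mul_sum]
  ring

end G2

end
end
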